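/- Let ι be a type and let (C i) be an ι-indexed family of categories, each admitting a zero object and ι-indexed products and coproducts. In the product category ∏ j, C j, let (X i)_{i ∈ ι} be a family of objects such that each X i is concentrated in component i. Then both the coproduct ∐ i, X i and the product ∏ i, X i exist in ∏ j, C j, and the canonical morphism ∐ i, X i → ∏ i, X i — whose (i,j)-component is the identity of X i in component i for j = i and the zero morphism for j ≠ i — is an isomorphism. (This is the abstract content of the paper's observation that ⊕_μ CT_*^μ ≃ ∏_μ CT_*^μ, which is the key step in proving that Eis_! is left adjoint to CT_*.) -/

import Mathlib

open CategoryTheory CategoryTheory.Limits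
open scoped Classical

universe w v u

/-- The canonical `(i,j)`-component morphism `X i ⟶ X j` in the product category:
the identity (transported along `i = j`) when `j = i`, and the (componentwise) zero
morphism, defined using the zero objects of the categories `C k`, when `j ≠ i`. -/
noncomputable def diagonalComponent {ι : Type w} (C : ι → Type u) [∀ i, Category.{v} (C i)]
    [∀ i, HasZeroObject (C i)] (X : ι → ∀ j, C j) (i j : ι) : X i ⟶ X j :=
  if h : i = j then eqToHom (congrArg X h)
  else
    show ∀ k, X i k ⟶ X j k from fun k =>
      letI : HasZeroMorphisms (C k) := HasZeroObject.zeroMorphismsOfZeroObject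
      0

section Helpers
variable {ι : Type w} (C : ι → Type u) [∀ i, Category.{v} (C i)]
    (X : ι → ∀ j, C j) (hX : ∀ i j, j ≠ i → IsZero (X i j))

/-- The diagonal object. -/
def diagObj : ∀ j, C j := fun k => X k k

/-- Inclusion of `X i` in the diagonal object. -/
noncomputable def diagInc (i : ι) : X i ⟶ diagObj C X :=
  show ∀ k, X i k ⟶ X k k from fun k =>
    if h : i = k then eqToHom (by rw [h]) else (hX i k (Ne.symm h)).to_ _

/-- Projection of the diagonal object to `X i`. -/
noncomputable def diagProj (i : ι) : diagObj C X ⟶ X i :=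
  show ∀ k, X k k ⟶ X i k from fun k =>
    if h : i = k then eqToHom (by rw [h]) else (hX i k (Ne.symm h)).from_ _

lemma diagInc_self (k : ι) : diagInc C X hX k k = 𝟙 (X k k) := by
  simp [diagInc]
  rfl

lemma diagProj_self (k : ι) : diagProj C X hX k k = 𝟙 (X k k) := by
  simp [diagProj]
  rfl

/-- The diagonal object is the coproduct. -/
noncomputable def diagIsColimit : IsColimit (Cofan.mk (diagObj C X) (diagInc C X hX)) :=
  Cofan.IsColimit.mk _ (fun s => show ∀ k, X k k ⟶ s.pt k from fun k => s.inj k k)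
    (by
      intro s i
      funext k
      change diagInc C X hX i k ≫ s.inj k k = s.inj i k
      by_cases h : i = k
      · subst h
        rw [diagInc_self]
        exact Category.id_comp _
      · exact (hX i k (Ne.symm h)).eq_of_src _ _)
    (by
      intro s m hm
      funext k
      have h : diagInc C X hX k k ≫ m k = s.inj k k := congrFun (hm k) k
      rw [diagInc_self] at h
      exact (Category.id_comp _).symm.trans h)

/-- The diagonal object is the product. -/
noncomputable def diagIsLimit : IsLimit (Fan.mk (diagObj C X) (diagProj C X hX)) :=
  Fan.IsLimit.mk _ (fun s => show ∀ k, s.pt k ⟶ X k k from fun k => s.proj k k)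
    (by
      intro s i
      funext k
      change s.proj k k ≫ diagProj C X hX i k = s.proj i k
      by_cases h : i = k
      · subst h
        rw [diagProj_self]
        exact Category.comp_id _
      · exact (hX i k (Ne.symm h)).eq_of_tgt _ _)
    (by
      intro s m hm
      funext k
      have h : m k ≫ diagProj C X hX k k = s.proj k k := congrFun (hm k) k
      rw [diagProj_self] at h
      exact (Category.comp_id _).symm.trans h)

lemma diagInc_proj [∀ i, HasZeroObject (C i)] (i j : ι) :
    diagInc C X hX i ≫ diagProj C X hX j = diagonalComponent C X i j := by
  funext k
  by_cases hi : i = k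
  · by_cases hj : j = k
    · subst hi
      subst hj
      change diagInc C X hX j j ≫ diagProj C X hX j j = _
      rw [diagInc_self, diagProj_self]
      simp [diagonalComponent]
      exact Category.comp_id _
    · exact (hX j k (Ne.symm hj)).eq_of_tgt _ _
  · exact (hX i k (Ne.symm hi)).eq_of_src _ _

end Helpers

/-- If each object `X i` of the product category `∏ j, C j` is concentrated in component `i`,
then the coproduct and the product of the family `X` exist, and the canonical morphism
`∐ i, X i ⟶ ∏ i, X i` (identity components on the diagonal, zero off the diagonal) is an
isomorphism. -/
theorem isIso_coproduct_to_product_of_concentrated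
    {ι : Type w} (C : ι → Type u) [∀ i, Category.{v} (C i)]
    [∀ i, HasZeroObject (C i)]
    [∀ i, HasLimitsOfShape (Discrete ι) (C i)]
    [∀ i, HasColimitsOfShape (Discrete ι) (C i)]
    (X : ι → ∀ j, C j)
    (hX : ∀ i j, j ≠ i → IsZero (X i j)) :
    ∃ (h₁ : HasColimit (Discrete.functor X)) (h₂ : HasLimit (Discrete.functor X)),
      letI := h₁
      letI := h₂
      IsIso (Sigma.desc fun i => Pi.lift fun j => diagonalComponent C X i j) := by
  have h₁ : HasColimit (Discrete.functor X) := ⟨⟨⟨_, diagIsColimit C X hX⟩⟩⟩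
  have h₂ : HasLimit (Discrete.functor X) := ⟨⟨⟨_, diagIsLimit C X hX⟩⟩⟩
  refine ⟨h₁, h₂, ?_⟩
  let e₁ := (colimit.isColimit (Discrete.functor X)).coconePointUniqueUpToIso
    (diagIsColimit C X hX)
  let e₂ := (diagIsLimit C X hX).conePointUniqueUpToIso (limit.isLimit (Discrete.functor X))
  have key : (Sigma.desc fun i => Pi.lift fun j => diagonalComponent C X i j) =
      e₁.hom ≫ e₂.hom := by
    refine Sigma.hom_ext _ _ fun i => Pi.hom_ext _ _ fun j => ?_
    have a : Sigma.ι X i ≫ e₁.hom = diagInc C X hX i :=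
      IsColimit.comp_coconePointUniqueUpToIso_hom _ (diagIsColimit C X hX) ⟨i⟩
    have b : e₂.hom ≫ Pi.π X j = diagProj C X hX j :=
      IsLimit.conePointUniqueUpToIso_hom_comp (diagIsLimit C X hX) _ ⟨j⟩
    rw [Sigma.ι_desc, Pi.lift_π, ← diagInc_proj C X hX, Category.assoc, Category.assoc]
    erw [b]
    rw [← Category.assoc]
    erw [a]
  change IsIso (Sigma.desc fun i => Pi.lift fun j => diagonalComponent C X i j)
  rw [key]
  infer_instance
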